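/- The lattices D16^+ and E8 ⊥ E8 in ℝ^16 have the same theta series: for every real number m, the set {x ∈ D16^+ : ‖x‖² = m} and the set {x ∈ E8 ⊥ E8 : ‖x‖² = m} are finite and have the same cardinality. -/

import Mathlib

noncomputable section

open scoped RealInnerProductSpace

/-- `ℝ^n` with the standard inner product. -/
abbrev E (n : ℕ) := EuclideanSpace ℝ (Fin n)

/-- The standard basis vector `ε i`. -/
def εv {n : ℕ} (i : Fin n) : E n := EuclideanSpace.single i 1

/-- The vector of `ℝ^n` with the given coordinates. -/
def vec {n : ℕ} (x : Fin n → ℝ) : E n := (WithLp.equiv 2 (Fin n → ℝ)).symm x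

/-- The vector of `ℝ^n` with the given integer coordinates. -/
def intVec {n : ℕ} (x : Fin n → ℤ) : E n := (WithLp.equiv 2 (Fin n → ℝ)).symm fun i => (x i : ℝ)

/-- A lattice is integral if all pairwise inner products of its elements are integers. -/
def LatticeIsIntegral {n : ℕ} (L : Submodule ℤ (E n)) : Prop :=
  ∀ x ∈ L, ∀ y ∈ L, ∃ k : ℤ, ⟪x, y⟫ = (k : ℝ)

/-- Two lattices are isometric if a linear isometry of the ambient space carries
one onto the other. -/
def IsometricLattices {n : ℕ} (L M : Submodule ℤ (E n)) : Prop :=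
  ∃ g : E n ≃ₗᵢ[ℝ] E n, g '' (L : Set (E n)) = (M : Set (E n))

/-- The lattice `D₁₆⁺ ⊆ ℝ¹⁶`: vectors whose coordinates are all integers or all
half-integers, with even coordinate sum. -/
def setD16plus : Set (E 16) :=
  {x | ((∀ i, ∃ k : ℤ, x i = k) ∨ (∀ i, ∃ k : ℤ, x i = k + 1/2)) ∧
    ∃ m : ℤ, ∑ i, x i = 2 * m}

/-- The `E₈` condition on an 8-tuple of reals: all coordinates integers or all
half-integers, with even coordinate sum. -/
def E8cond (y : Fin 8 → ℝ) : Prop :=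
  ((∀ i, ∃ k : ℤ, y i = k) ∨ (∀ i, ∃ k : ℤ, y i = k + 1/2)) ∧
    ∃ m : ℤ, ∑ i, y i = 2 * m

/-- The lattice `E₈ ⊥ E₈ ⊆ ℝ¹⁶`. -/
def setE8E8 : Set (E 16) :=
  {x | E8cond (fun i => x ⟨i.1, by have := i.2; omega⟩) ∧
       E8cond (fun i => x ⟨i.1 + 8, by have := i.2; omega⟩)}

/-!
Cut `ℝ¹⁶` into four copies of `ℝ⁴`. Both lattices lie between `D₄⁴` and `(D₄*)⁴`, so each is the
preimage of a code of length four over the glue group `D₄*/D₄ ≅ (ℤ/2)²`. The reflections of `D₄*` in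
its vectors of norm `1` act on the glue group as all of its transvections (triality), hence permute
the three nonzero classes transitively. The number of vectors of a given norm above a codeword
therefore depends only on the Hamming weight of the codeword, and both codes have weight enumerator
`X⁴ + 6X²Y² + 9Y⁴`.
-/

section Glue

variable {β K V M : Type*} [Fintype β] [AddCommMonoid M]

/-- The shell of norm `n` in the union of cosets cut out by the glue code `C`: `β`-tuples in `V`,
with norm form `q`, whose word of glue classes `cls` lies in `C`. -/
def glueShell (cls : V → K) (q : V → M) (C : Set (β → K)) (n : M) : Set (β → V) :=
  {y | cls ∘ y ∈ C ∧ ∑ i, q (y i) = n}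

variable {cls : V → K} {q : V → M}

theorem encard_glueShell_eq_sum (C : Finset (β → K)) (n : M) :
    (glueShell cls q (C : Set (β → K)) n).encard = ∑ w ∈ C, (glueShell cls q {w} n).encard := by
  have hunion :
      glueShell cls q (C : Set (β → K)) n = ⋃ w ∈ (C : Set (β → K)), glueShell cls q {w} n := by
    ext y
    simp [glueShell]
  have hdisj : (C : Set (β → K)).PairwiseDisjoint fun w ↦ glueShell cls q {w} n :=
    fun w _ w' _ hne ↦ Set.disjoint_left.2 fun y hy hy' ↦ hne (hy.1.symm.trans hy'.1)
  rw [hunion, C.finite_toSet.encard_biUnion hdisj, finsum_mem_coe_finset]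

variable [Zero K] [DecidableEq K]

theorem exists_perm_of_hammingNorm_eq {w w' : β → K} (h : hammingNorm w = hammingNorm w') :
    ∃ π : Equiv.Perm β, ∀ i, w i ≠ 0 ↔ w' (π i) ≠ 0 := by
  classical
  have hcard : Fintype.card {i // w i ≠ 0} = Fintype.card {i // w' i ≠ 0} := by
    simpa only [Fintype.card_subtype, hammingNorm] using h
  let e := Fintype.equivOfCardEq hcard
  exact ⟨e.extendSubtype, fun i ↦
    ⟨e.extendSubtype_mem i, not_imp_not.1 (e.extendSubtype_not_mem i)⟩⟩

theorem encard_glueShell_singleton_eq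
    (hcls : ∀ a b : K, (a ≠ 0 ↔ b ≠ 0) →
      ∃ e : Equiv.Perm V, ∀ v, (cls (e v) = b ↔ cls v = a) ∧ q (e v) = q v)
    {w w' : β → K} (h : hammingNorm w = hammingNorm w') (n : M) :
    (glueShell cls q {w} n).encard = (glueShell cls q {w'} n).encard := by
  obtain ⟨π, hπ⟩ := exists_perm_of_hammingNorm_eq h
  choose e he using fun i ↦ hcls (w i) (w' (π i)) (hπ i)
  let F : (β → V) ≃ (β → V) := π.piCongr e
  have hF (y : β → V) (i : β) : F y (π i) = e i (y i) := Equiv.piCongr_apply_apply ..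
  refine Set.encard_congr (F.subtypeEquiv fun y ↦ and_congr ?_ ?_)
  · simp only [Set.mem_singleton_iff, funext_iff, Function.comp_apply,
      ← π.forall_congr_right (q := fun i ↦ cls (F y i) = w' i), hF, (he _ _).1]
  · simp only [← Equiv.sum_comp π fun i ↦ q (F y i), hF, (he _ _).2]

theorem encard_glueShell_eq_of_map_hammingNorm_eq
    (hcls : ∀ a b : K, (a ≠ 0 ↔ b ≠ 0) →
      ∃ e : Equiv.Perm V, ∀ v, (cls (e v) = b ↔ cls v = a) ∧ q (e v) = q v)
    {C C' : Finset (β → K)} (h : C.val.map hammingNorm = C'.val.map hammingNorm) (n : M) :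
    (glueShell cls q (C : Set (β → K)) n).encard =
      (glueShell cls q (C' : Set (β → K)) n).encard := by
  have hfactors : (fun w ↦ (glueShell cls q {w} n).encard).FactorsThrough
      (hammingNorm : (β → K) → ℕ) := fun _ _ h ↦ encard_glueShell_singleton_eq hcls h n
  obtain ⟨N, hN⟩ := (Function.factorsThrough_iff _).1 hfactors
  have hsum (D : Finset (β → K)) :
      (glueShell cls q (D : Set (β → K)) n).encard = ((D.val.map hammingNorm).map N).sum := by
    rw [encard_glueShell_eq_sum, Multiset.map_map]
    exact Finset.sum_congr rfl fun w _ ↦ congrFun hN w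
  rw [hsum, hsum, h]

end Glue

section Reflection

variable {ι : Type*} [Fintype ι]

/-- With `x = y / 2` and `r = u / 2` a vector of norm `1`, this is the reflection
`x ↦ x - 2⟪x, r⟫ r` in the doubled coordinates `y`, `u`. -/
def doubledReflection (u y : ι → ℤ) : ι → ℤ := y - (y ⬝ᵥ u / 2) • u

variable {u y : ι → ℤ}

theorem doubledReflection_dotProduct (hu : u ⬝ᵥ u = 4) (hy : 2 ∣ y ⬝ᵥ u) :
    doubledReflection u y ⬝ᵥ u = -(y ⬝ᵥ u) := by
  rw [doubledReflection, sub_dotProduct, smul_dotProduct, hu, smul_eq_mul]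
  omega

theorem doubledReflection_doubledReflection (hu : u ⬝ᵥ u = 4) (hy : 2 ∣ y ⬝ᵥ u) :
    doubledReflection u (doubledReflection u y) = y := by
  rw [doubledReflection, doubledReflection_dotProduct hu hy, Int.neg_ediv_of_dvd hy, neg_smul,
    sub_neg_eq_add, doubledReflection, sub_add_cancel]

theorem doubledReflection_dotProduct_self (hu : u ⬝ᵥ u = 4) (hy : 2 ∣ y ⬝ᵥ u) :
    doubledReflection u y ⬝ᵥ doubledReflection u y = y ⬝ᵥ y := by
  obtain ⟨d, hd⟩ := hy
  simp only [doubledReflection, sub_dotProduct, dotProduct_sub, smul_dotProduct, dotProduct_smul,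
    dotProduct_comm u y, hu, hd, smul_eq_mul, Int.mul_ediv_cancel_left d two_ne_zero]
  ring

end Reflection

/-- The dual lattice `D₄*`, doubled so that its vectors are integral: all coordinates of a vector
have the same parity. -/
def D4Dual : AddSubgroup (Fin 4 → ℤ) where
  carrier := {y | ∀ j, (y j : ZMod 2) = y 0}
  zero_mem' _ := rfl
  add_mem' hy hz j := by simp [hy j, hz j]
  neg_mem' hy j := by simp [hy j]

namespace D4Dual

theorem exists_eq_add_two_mul (y : D4Dual) :
    ∃ (p : ℤ) (a : Fin 4 → ℤ), ∀ j, y.1 j = p + 2 * a j := by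
  have h (j : Fin 4) : ∃ a, y.1 j = y.1 0 + 2 * a := by
    obtain ⟨a, ha⟩ := (ZMod.intCast_eq_intCast_iff_dvd_sub _ _ 2).1 (y.2 j).symm
    exact ⟨a, by push_cast at ha; linarith⟩
  choose a ha using h
  exact ⟨y.1 0, a, ha⟩

theorem two_dvd_sum (y : D4Dual) : 2 ∣ ∑ j, y.1 j := by
  obtain ⟨p, a, ha⟩ := exists_eq_add_two_mul y
  simp only [ha, Fin.sum_univ_four]
  omega

/-- The glue map `D₄* → D₄*/D₄ ≅ (ℤ/2)²`. For `x = y / 2` the first component says whether `x` has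
integral or half-integral coordinates; the second is the parity of the coordinate sum of `x`. -/
def glue : D4Dual →+ ZMod 2 × ZMod 2 :=
  AddMonoidHom.mk' (fun y ↦ (y.1 0, ((∑ j, y.1 j) / 2 : ℤ))) fun y z ↦ by
    simp [Finset.sum_add_distrib, Int.add_ediv_of_dvd_left (two_dvd_sum y)]

theorem glue_fst (y : D4Dual) (j : Fin 4) : (glue y).1 = y.1 j := (y.2 j).symm

theorem glue_snd {y : D4Dual} {s : ℤ} (h : ∑ j, y.1 j = 2 * s) : (glue y).2 = s := by
  change (((∑ j, y.1 j) / 2 : ℤ) : ZMod 2) = s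
  rw [h, Int.mul_ediv_cancel_left s two_ne_zero]

/-- The alternating form on the glue group `D₄*/D₄` given by twice the inner product modulo `2`. -/
def gluePairing (a b : ZMod 2 × ZMod 2) : ZMod 2 := a.1 * b.2 + a.2 * b.1

theorem exists_dotProduct_eq_two_mul (y u : D4Dual) : ∃ d : ℤ, y.1 ⬝ᵥ u.1 = 2 * d ∧
    (d : ZMod 2) = gluePairing (glue y) (glue u) := by
  obtain ⟨p, a, ha⟩ := exists_eq_add_two_mul y
  obtain ⟨r, b, hb⟩ := exists_eq_add_two_mul u
  have two_eq_zero : (2 : ZMod 2) = 0 := rfl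
  have hy : (glue y).2 = (2 * p + ∑ j, a j : ℤ) :=
    glue_snd (by simp only [ha, Fin.sum_univ_four]; ring)
  have hu : (glue u).2 = (2 * r + ∑ j, b j : ℤ) :=
    glue_snd (by simp only [hb, Fin.sum_univ_four]; ring)
  refine ⟨2 * (p * r + a ⬝ᵥ b) + p * ∑ j, b j + (∑ j, a j) * r, ?_, ?_⟩
  · simp only [dotProduct, ha, hb, Fin.sum_univ_four]
    ring
  · rw [gluePairing, hy, hu, glue_fst y 0, glue_fst u 0, ha, hb]
    simp [two_eq_zero]

/-- The reflection of `D₄*` in its vector `u / 2` of norm `1`. -/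
def reflection (u : D4Dual) (hu : u.1 ⬝ᵥ u.1 = 4) : Equiv.Perm D4Dual :=
  Function.Involutive.toPerm
    (fun y ↦ ⟨doubledReflection u.1 y.1, sub_mem y.2 (zsmul_mem u.2 _)⟩) fun y ↦
      Subtype.ext (doubledReflection_doubledReflection hu
        ((exists_dotProduct_eq_two_mul y u).imp fun _ h ↦ h.1))

theorem glue_reflection (u y : D4Dual) (hu : u.1 ⬝ᵥ u.1 = 4) :
    glue (reflection u hu y) = glue y + gluePairing (glue y) (glue u) • glue u := by
  obtain ⟨d, hd, hd2⟩ := exists_dotProduct_eq_two_mul y u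
  have hrefl : reflection u hu y = y - d • u := by
    refine Subtype.ext ?_
    change y.1 - (y.1 ⬝ᵥ u.1 / 2) • u.1 = y.1 - d • u.1
    rw [hd, Int.mul_ediv_cancel_left d two_ne_zero]
  rw [hrefl, map_sub, map_zsmul, ← hd2, CharTwo.sub_eq_add, Int.cast_smul_eq_zsmul]

/-- The norm of the vector `y / 2` of `D₄*`. -/
def normSq (y : D4Dual) : ℝ := ((y.1 ⬝ᵥ y.1 : ℤ) : ℝ) / 4

theorem normSq_reflection (u y : D4Dual) (hu : u.1 ⬝ᵥ u.1 = 4) :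
    normSq (reflection u hu y) = normSq y := by
  have hy : 2 ∣ y.1 ⬝ᵥ u.1 := (exists_dotProduct_eq_two_mul y u).imp fun _ h ↦ h.1
  exact congrArg (fun k : ℤ ↦ (k : ℝ) / 4) (doubledReflection_dotProduct_self hu hy)

theorem exists_glue_eq_of_ne_zero {c : ZMod 2 × ZMod 2} (hc : c ≠ 0) :
    ∃ u : D4Dual, u.1 ⬝ᵥ u.1 = 4 ∧ glue u = c := by
  have hcases : c = (0, 1) ∨ c = (1, 0) ∨ c = (1, 1) := by decide +revert
  rcases hcases with rfl | rfl | rfl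
  · exact ⟨⟨![2, 0, 0, 0], fun j ↦ by decide +revert⟩, by decide, by decide⟩
  · exact ⟨⟨![1, 1, 1, 1], fun j ↦ by decide +revert⟩, by decide, by decide⟩
  · exact ⟨⟨![1, 1, 1, -1], fun j ↦ by decide +revert⟩, by decide, by decide⟩

theorem add_gluePairing_smul_add_eq_iff {a b : ZMod 2 × ZMod 2} (ha : a ≠ 0) (hb : b ≠ 0)
    (c : ZMod 2 × ZMod 2) : c + gluePairing c (a + b) • (a + b) = b ↔ c = a := by
  unfold gluePairing
  decide +revert

theorem exists_perm_glue_eq_iff (a b : ZMod 2 × ZMod 2) (hab : a ≠ 0 ↔ b ≠ 0) :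
    ∃ e : Equiv.Perm D4Dual, ∀ y, (glue (e y) = b ↔ glue y = a) ∧ normSq (e y) = normSq y := by
  by_cases h : a = b
  · exact ⟨Equiv.refl _, fun y ↦ ⟨by rw [h, Equiv.refl_apply], rfl⟩⟩
  · have ha : a ≠ 0 := by decide +revert
    obtain ⟨u, hu, hglue⟩ := exists_glue_eq_of_ne_zero (c := a + b) (by decide +revert)
    refine ⟨reflection u hu, fun y ↦ ⟨?_, normSq_reflection u y hu⟩⟩
    rw [glue_reflection, hglue]
    exact add_gluePairing_smul_add_eq_iff ha (hab.1 ha) _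

end D4Dual

/-- The real tuples whose coordinates are all integers or all half-integers, with even sum: the
set `Dₙ⁺` with `n = |ι|`, which is a lattice for even `n`. -/
def dPlus (ι : Type*) [Fintype ι] : Set (ι → ℝ) :=
  {x | ((∀ i, ∃ k : ℤ, x i = k) ∨ (∀ i, ∃ k : ℤ, x i = k + 1 / 2)) ∧ ∃ m : ℤ, ∑ i, x i = 2 * m}

theorem comp_equiv_mem_dPlus {ι κ : Type*} [Fintype ι] [Fintype κ] (e : ι ≃ κ) {x : κ → ℝ} :
    x ∘ e ∈ dPlus ι ↔ x ∈ dPlus κ := by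
  simp only [dPlus, Set.mem_ofPred_eq, Function.comp_apply, e.sum_comp x,
    e.forall_congr_right (q := fun i ↦ ∃ k : ℤ, x i = k),
    e.forall_congr_right (q := fun i ↦ ∃ k : ℤ, x i = k + 1 / 2)]

section Parity

variable {z : ℤ}

theorem exists_eq_two_mul_iff : (∃ k : ℤ, (z : ℝ) = 2 * k) ↔ (z : ZMod 2) = 0 := by
  rw [ZMod.intCast_eq_zero_iff_even, even_iff_exists_two_mul]
  exact exists_congr fun k ↦ by norm_cast

theorem exists_div_two_eq_iff : (∃ k : ℤ, (z : ℝ) / 2 = k) ↔ (z : ZMod 2) = 0 := by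
  rw [← exists_eq_two_mul_iff]
  exact exists_congr fun k ↦ by rw [div_eq_iff two_ne_zero, mul_comm]

theorem exists_div_two_eq_add_half_iff :
    (∃ k : ℤ, (z : ℝ) / 2 = k + 1 / 2) ↔ (z : ZMod 2) = 1 := by
  rw [ZMod.intCast_eq_one_iff_odd]
  refine exists_congr fun k ↦ ?_
  rw [div_eq_iff two_ne_zero, add_mul, one_div_mul_cancel two_ne_zero, mul_comm]
  norm_cast

end Parity

section Blocks

variable {β : Type*}

/-- The real vector with blocks `y i / 2 ∈ D₄*`. -/
def ofBlocks (y : β → D4Dual) (p : β × Fin 4) : ℝ := (y p.1).1 p.2 / 2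

theorem exists_ofBlocks_eq {x : β × Fin 4 → ℝ}
    (h : ∀ i, (∀ j, ∃ k : ℤ, x (i, j) = k) ∨ ∀ j, ∃ k : ℤ, x (i, j) = k + 1 / 2) :
    ∃ y : β → D4Dual, ofBlocks y = x := by
  have hparity (i : β) : ∃ r : ℤ, ∀ j, ∃ k : ℤ, x (i, j) = k + r / 2 := by
    rcases h i with h | h
    · exact ⟨0, by simpa using h⟩
    · exact ⟨1, by simpa using h⟩
  choose r z hz using hparity
  have two_eq_zero : (2 : ZMod 2) = 0 := rfl
  refine ⟨fun i ↦ ⟨fun j ↦ 2 * z i j + r i, fun j ↦ by simp [two_eq_zero]⟩, ?_⟩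
  funext ⟨i, j⟩
  simp only [ofBlocks, hz]
  push_cast
  ring

theorem ofBlocks_injective : Function.Injective (ofBlocks (β := β)) := by
  refine fun y z h ↦ funext fun i ↦ Subtype.ext <| funext fun j ↦ ?_
  have hij := congrFun h (i, j)
  simp only [ofBlocks] at hij
  exact_mod_cast (div_left_inj' two_ne_zero).1 hij

variable [Fintype β]

theorem sum_ofBlocks_sq (y : β → D4Dual) :
    ∑ p, ofBlocks y p ^ 2 = ∑ i, D4Dual.normSq (y i) := by
  simp only [ofBlocks, D4Dual.normSq, dotProduct, Fintype.sum_prod_type, Fin.sum_univ_four]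
  refine Finset.sum_congr rfl fun i _ ↦ ?_
  push_cast
  ring

theorem finite_setOf_sum_normSq_eq (β : Type*) [Fintype β] (m : ℝ) :
    {y : β → D4Dual | ∑ i, D4Dual.normSq (y i) = m}.Finite := by
  have hinj : Function.Injective fun (y : β → D4Dual) i ↦ (y i).1 :=
    Subtype.val_injective.comp_left
  refine ((isCompact_closedBall (0 : β → Fin 4 → ℤ) (4 * m)).finite_of_discrete.preimage
    hinj.injOn).subset fun y (hy : _ = m) ↦ ?_
  rw [← sum_ofBlocks_sq] at hy
  have hm : 0 ≤ 4 * m := by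
    rw [← hy]
    positivity
  rw [Set.mem_preimage, mem_closedBall_zero_iff, pi_norm_le_iff_of_nonneg hm]
  refine fun i ↦ (pi_norm_le_iff_of_nonneg hm).2 fun j ↦ ?_
  have hcoord : ofBlocks y (i, j) ^ 2 ≤ m :=
    hy ▸ Finset.single_le_sum (fun p _ ↦ sq_nonneg (ofBlocks y p)) (Finset.mem_univ (i, j))
  calc ‖(y i).1 j‖ ≤ ((y i).1 j : ℝ) ^ 2 := by
        rw [Int.norm_eq_abs, ← sq_abs]
        exact_mod_cast Int.le_self_sq _
    _ = 4 * ofBlocks y (i, j) ^ 2 := by rw [ofBlocks]; ring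
    _ ≤ 4 * m := by gcongr

/-- The glue code of `Dₙ⁺` over its sublattice `D₄ᵝ`, where `n = 4|β|`. -/
def dPlusCode (β : Type*) [Fintype β] [DecidableEq β] : Finset (β → ZMod 2 × ZMod 2) :=
  {w | ((∀ i, (w i).1 = 0) ∨ ∀ i, (w i).1 = 1) ∧ ∑ i, (w i).2 = 0}

theorem ofBlocks_mem_dPlus_iff [DecidableEq β] {y : β → D4Dual} :
    ofBlocks y ∈ dPlus (β × Fin 4) ↔ D4Dual.glue ∘ y ∈ dPlusCode β := by
  choose s hs using fun i ↦ D4Dual.two_dvd_sum (y i)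
  have hsum : ∑ p, ofBlocks y p = ((∑ i, s i : ℤ) : ℝ) := by
    simp only [ofBlocks, Fintype.sum_prod_type, ← Finset.sum_div]
    rw [div_eq_iff two_ne_zero, mul_comm]
    exact_mod_cast (Finset.sum_congr rfl fun i _ ↦ hs i).trans (Finset.mul_sum ..).symm
  have hglue : ∑ i, (D4Dual.glue (y i)).2 = (∑ i, s i : ℤ) := by
    simp only [D4Dual.glue_snd (hs _), Int.cast_sum]
  simp only [dPlus, dPlusCode, Set.mem_ofPred_eq, Finset.mem_filter_univ, Function.comp_apply,
    hsum, exists_eq_two_mul_iff, hglue]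
  simp only [ofBlocks, exists_div_two_eq_iff, exists_div_two_eq_add_half_iff, Prod.forall,
    ← D4Dual.glue_fst, forall_const]

end Blocks

/-- The glue code of `E₈ ⊥ E₈` over its sublattice `D₄⁴`. -/
def e8e8Code : Finset (Fin 4 → ZMod 2 × ZMod 2) :=
  {w | w ∘ Fin.castAdd 2 ∈ dPlusCode (Fin 2) ∧ w ∘ Fin.natAdd 2 ∈ dPlusCode (Fin 2)}

theorem map_hammingNorm_dPlusCode_eq :
    (dPlusCode (Fin 4)).val.map hammingNorm = e8e8Code.val.map hammingNorm := by
  decide +kernel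

/-- The coordinates of `ℝ¹⁶` cut into four consecutive blocks of four. -/
def coordEquiv : Fin 4 × Fin 4 ≃ Fin 16 := finProdFinEquiv

/-- The vector of `ℝ¹⁶` whose `i`-th block of four coordinates is `y i / 2`. -/
def vecOfBlocks (y : Fin 4 → D4Dual) : E 16 := vec (ofBlocks y ∘ coordEquiv.symm)

theorem vecOfBlocks_comp_coordEquiv (y : Fin 4 → D4Dual) :
    ⇑(vecOfBlocks y) ∘ coordEquiv = ofBlocks y :=
  funext fun p ↦ congrArg (ofBlocks y) (coordEquiv.symm_apply_apply p)

theorem vecOfBlocks_injective : Function.Injective vecOfBlocks := fun y z h ↦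
  ofBlocks_injective (by rw [← vecOfBlocks_comp_coordEquiv, h, vecOfBlocks_comp_coordEquiv])

theorem norm_vecOfBlocks_sq (y : Fin 4 → D4Dual) :
    ‖vecOfBlocks y‖ ^ 2 = ∑ i, D4Dual.normSq (y i) := by
  rw [EuclideanSpace.real_norm_sq_eq, ← sum_ofBlocks_sq, ← vecOfBlocks_comp_coordEquiv]
  exact (coordEquiv.sum_comp fun k ↦ vecOfBlocks y k ^ 2).symm

theorem mem_range_vecOfBlocks {x : E 16}
    (h : ∀ i, (∀ j, ∃ k : ℤ, x (coordEquiv (i, j)) = k) ∨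
      ∀ j, ∃ k : ℤ, x (coordEquiv (i, j)) = k + 1 / 2) :
    x ∈ Set.range vecOfBlocks := by
  obtain ⟨y, hy⟩ := exists_ofBlocks_eq (x := ⇑x ∘ coordEquiv) h
  refine ⟨y, PiLp.ext fun k ↦ ?_⟩
  rw [← vecOfBlocks_comp_coordEquiv] at hy
  simpa using congrFun hy (coordEquiv.symm k)

theorem shell_eq_image_glueShell {L : Set (E 16)} {C : Set (Fin 4 → ZMod 2 × ZMod 2)}
    (hL : L ⊆ Set.range vecOfBlocks) (hC : ∀ y, vecOfBlocks y ∈ L ↔ D4Dual.glue ∘ y ∈ C) (m : ℝ) :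
    {x ∈ L | ‖x‖ ^ 2 = m} = vecOfBlocks '' glueShell D4Dual.glue D4Dual.normSq C m := by
  have hpreimage : glueShell D4Dual.glue D4Dual.normSq C m =
      vecOfBlocks ⁻¹' {x ∈ L | ‖x‖ ^ 2 = m} := by
    ext y
    simp only [glueShell, Set.mem_preimage, Set.mem_ofPred_eq, hC, norm_vecOfBlocks_sq]
  rw [hpreimage, Set.image_preimage_eq_of_subset ((Set.sep_subset _ _).trans hL)]

theorem mem_setD16plus_iff {x : E 16} :
    x ∈ setD16plus ↔ ⇑x ∘ coordEquiv ∈ dPlus (Fin 4 × Fin 4) :=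
  (comp_equiv_mem_dPlus coordEquiv).symm

theorem setD16plus_subset_range : setD16plus ⊆ Set.range vecOfBlocks := fun _ hx ↦
  mem_range_vecOfBlocks fun _ ↦ hx.1.imp (fun h _ ↦ h _) (fun h _ ↦ h _)

theorem vecOfBlocks_mem_setD16plus_iff (y : Fin 4 → D4Dual) :
    vecOfBlocks y ∈ setD16plus ↔ D4Dual.glue ∘ y ∈ dPlusCode (Fin 4) := by
  rw [mem_setD16plus_iff, vecOfBlocks_comp_coordEquiv, ofBlocks_mem_dPlus_iff]

theorem mem_setE8E8_iff {x : E 16} :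
    x ∈ setE8E8 ↔
      (fun p : Fin 2 × Fin 4 ↦ x (coordEquiv (Fin.castAdd 2 p.1, p.2))) ∈ dPlus (Fin 2 × Fin 4) ∧
      (fun p : Fin 2 × Fin 4 ↦ x (coordEquiv (Fin.natAdd 2 p.1, p.2))) ∈ dPlus (Fin 2 × Fin 4) := by
  have hfst (p : Fin 2 × Fin 4) : coordEquiv (Fin.castAdd 2 p.1, p.2) =
      Fin.castAdd 8 (finProdFinEquiv p) := rfl
  have hsnd (p : Fin 2 × Fin 4) : coordEquiv (Fin.natAdd 2 p.1, p.2) =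
      Fin.addNat (finProdFinEquiv p) 8 := by
    ext
    change p.2.1 + 4 * (2 + p.1.1) = p.2.1 + 4 * p.1.1 + 8
    ring
  simp only [hfst, hsnd]
  exact and_congr (comp_equiv_mem_dPlus (finProdFinEquiv (m := 2) (n := 4))).symm
    (comp_equiv_mem_dPlus (finProdFinEquiv (m := 2) (n := 4))).symm

theorem setE8E8_subset_range : setE8E8 ⊆ Set.range vecOfBlocks := by
  intro x hx
  obtain ⟨h₁, h₂⟩ := mem_setE8E8_iff.1 hx
  refine mem_range_vecOfBlocks (Fin.addCases (m := 2) (n := 2) (fun i ↦ ?_) fun i ↦ ?_)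
  · exact h₁.1.imp (fun h j ↦ h (i, j)) (fun h j ↦ h (i, j))
  · exact h₂.1.imp (fun h j ↦ h (i, j)) (fun h j ↦ h (i, j))

theorem vecOfBlocks_mem_setE8E8_iff (y : Fin 4 → D4Dual) :
    vecOfBlocks y ∈ setE8E8 ↔ D4Dual.glue ∘ y ∈ e8e8Code := by
  have hblock (p : Fin 4 × Fin 4) : vecOfBlocks y (coordEquiv p) = ofBlocks y p :=
    congrFun (vecOfBlocks_comp_coordEquiv y) p
  rw [mem_setE8E8_iff, e8e8Code, Finset.mem_filter_univ]
  simp only [hblock]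
  exact and_congr (ofBlocks_mem_dPlus_iff (y := y ∘ Fin.castAdd 2))
    (ofBlocks_mem_dPlus_iff (y := y ∘ Fin.natAdd 2 (m := 2)))

/-- `D₁₆⁺` and `E₈ ⊥ E₈` have the same theta series: for every `m`, the shells of norm
`m` of the two lattices are finite and have the same cardinality. -/
theorem D16plus_E8E8_same_theta (m : ℝ) :
    {x ∈ setD16plus | ‖x‖ ^ 2 = m}.Finite ∧
    {x ∈ setE8E8 | ‖x‖ ^ 2 = m}.Finite ∧
    {x ∈ setD16plus | ‖x‖ ^ 2 = m}.ncard = {x ∈ setE8E8 | ‖x‖ ^ 2 = m}.ncard := by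
  rw [shell_eq_image_glueShell setD16plus_subset_range vecOfBlocks_mem_setD16plus_iff,
    shell_eq_image_glueShell setE8E8_subset_range vecOfBlocks_mem_setE8E8_iff]
  have hfinite (C : Set (Fin 4 → ZMod 2 × ZMod 2)) :
      (glueShell D4Dual.glue D4Dual.normSq C m).Finite :=
    (finite_setOf_sum_normSq_eq (Fin 4) m).subset fun _ hy ↦ hy.2
  refine ⟨(hfinite _).image _, (hfinite _).image _, ?_⟩
  rw [Set.ncard_image_of_injective _ vecOfBlocks_injective,
    Set.ncard_image_of_injective _ vecOfBlocks_injective]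
  exact congrArg ENat.toNat (encard_glueShell_eq_of_map_hammingNorm_eq
    D4Dual.exists_perm_glue_eq_iff map_hammingNorm_dPlusCode_eq m)
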